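/- Let θ = (1+√5)/2, θ̄ = (1−√5)/2, α = 1 + i·θ̄, and σ(α) = 1 + i·θ. The minimum, over all pairs (x₀, x₁) ∈ (ℤ[i][θ])² with (x₀, x₁) ≠ (0, 0), of the squared modulus of det( (1/√5)·[[α x₀, α x₁], [i·σ(α)σ(x₁), σ(α)σ(x₀)]] ) = (1/5)·α σ(α)·(x₀σ(x₀) − i·x₁σ(x₁)) equals 1/5. That is, the minimum determinant of the Golden code is δ(C) = 1/5. -/

import Mathlib

noncomputable section

open Complex GaussianInt

/-- `θ = (1+√5)/2` as a complex number. -/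
def thC : ℂ := (1 + Real.sqrt 5) / 2

/-- `θ̄ = (1−√5)/2` as a complex number. -/
def thbC : ℂ := (1 - Real.sqrt 5) / 2

/-- `α = 1 + i·θ̄`. -/
def alC : ℂ := 1 + Complex.I * thbC

/-- `σ(α) = 1 + i·θ`. -/
def salC : ℂ := 1 + Complex.I * thC

/-- The prime `2 + i` of the Gaussian integers. -/
def gpi : GaussianInt := ⟨2, 1⟩

/-- The Gaussian integer `i`. -/
def gI : GaussianInt := ⟨0, 1⟩

lemma gpi_dvd_iff (u : GaussianInt) : gpi ∣ u ↔ ((u.re - 2 * u.im : ℤ) : ZMod 5) = 0 := by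
  rw [ZMod.intCast_zmod_eq_zero_iff_dvd]
  constructor
  · rintro ⟨w, rfl⟩
    exact ⟨- w.im, by simp [gpi]; ring⟩
  · rintro ⟨k, hk⟩
    push_cast at hk
    refine ⟨⟨u.im + 2 * k, -k⟩, ?_⟩
    ext
    · simp [gpi]; linarith
    · simp [gpi]

lemma gpi_key (u v : GaussianInt) (h : gpi ∣ u ^ 2 - gI * v ^ 2) : gpi ∣ u ∧ gpi ∣ v := by
  rw [gpi_dvd_iff] at *
  rw [gpi_dvd_iff]
  have aux : ∀ p q r s : ZMod 5, (p * p - q * q + 2 * r * s) - 2 * (2 * p * q - (r * r - s * s)) = 0 →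
    p - 2 * q = 0 ∧ r - 2 * s = 0 := by decide
  have := aux u.re u.im v.re v.im ?_
  · push_cast; exact this
  · rw [← h]
    simp [pow_two, gI]
    ring

lemma gpi_step (X Y b d : GaussianInt) (h : X ^ 2 - 5 * b ^ 2 = gI * (Y ^ 2 - 5 * d ^ 2)) :
    ∃ X' Y' b' d', X = gpi * X' ∧ Y = gpi * Y' ∧ b = gpi * b' ∧ d = gpi * d' ∧
      X' ^ 2 - 5 * b' ^ 2 = gI * (Y' ^ 2 - 5 * d' ^ 2) := by
  have h5 : (5 : GaussianInt) = gpi * ⟨2, -1⟩ := by decide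
  have hne : gpi ≠ 0 := by decide
  obtain ⟨⟨X', rfl⟩, ⟨Y', rfl⟩⟩ := gpi_key X Y
    ⟨⟨2, -1⟩ * (b ^ 2 - gI * d ^ 2), by linear_combination h + (b ^ 2 - gI * d ^ 2) * h5⟩
  have h2 : (⟨2, -1⟩ : GaussianInt) * (b ^ 2 - gI * d ^ 2) = gpi * (X' ^ 2 - gI * Y' ^ 2) := by
    apply mul_left_cancel₀ hne
    linear_combination - h - (b ^ 2 - gI * d ^ 2) * h5
  have hbez : gpi * ⟨1, -1⟩ - ⟨2, -1⟩ = (1 : GaussianInt) := by decide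
  obtain ⟨⟨b', rfl⟩, ⟨d', rfl⟩⟩ := gpi_key b d
    ⟨⟨1, -1⟩ * (b ^ 2 - gI * d ^ 2) - (X' ^ 2 - gI * Y' ^ 2), by
      linear_combination - (b ^ 2 - gI * d ^ 2) * hbez - h2⟩
  refine ⟨X', Y', b', d', rfl, rfl, rfl, rfl, ?_⟩
  apply mul_left_cancel₀ (pow_ne_zero 2 hne)
  linear_combination h

lemma gpi_pow (n : ℕ) : ∀ X Y b d : GaussianInt, X ^ 2 - 5 * b ^ 2 = gI * (Y ^ 2 - 5 * d ^ 2) →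
    gpi ^ n ∣ X ∧ gpi ^ n ∣ Y ∧ gpi ^ n ∣ b ∧ gpi ^ n ∣ d := by
  induction n with
  | zero => simp
  | succ n ih =>
    intro X Y b d h
    obtain ⟨X', Y', b', d', rfl, rfl, rfl, rfl, h'⟩ := gpi_step X Y b d h
    obtain ⟨h1, h2, h3, h4⟩ := ih _ _ _ _ h'
    rw [pow_succ']
    exact ⟨mul_dvd_mul_left _ h1, mul_dvd_mul_left _ h2, mul_dvd_mul_left _ h3,
      mul_dvd_mul_left _ h4⟩

lemma gpi_zero (u : GaussianInt) (h : ∀ n : ℕ, gpi ^ n ∣ u) : u = 0 := by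
  by_contra hu
  have hunit : ¬ IsUnit gpi := by
    rw [← Zsqrtd.norm_eq_one_iff]; decide
  obtain ⟨n, hn⟩ := FiniteMultiplicity.of_not_isUnit hunit hu
  exact hn (h _)

/-- `N(x₀) - i N(x₁)` as a Gaussian integer. -/
def gz (a b c d : GaussianInt) : GaussianInt :=
  (a ^ 2 + a * b - b ^ 2) - gI * (c ^ 2 + c * d - d ^ 2)

lemma gz_ne (a b c d : GaussianInt) (h : gz a b c d = 0) : a = 0 ∧ b = 0 ∧ c = 0 ∧ d = 0 := by
  have H : ∀ n, _ := fun n => gpi_pow n (2 * a + b) (2 * c + d) b d (by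
    unfold gz at h; linear_combination 4 * h)
  have hX := gpi_zero _ fun n => (H n).1
  have hY := gpi_zero _ fun n => (H n).2.1
  have hb := gpi_zero _ fun n => (H n).2.2.1
  have hd := gpi_zero _ fun n => (H n).2.2.2
  subst hb hd
  simp only [add_zero, mul_eq_zero] at hX hY
  have h2 : (2 : GaussianInt) ≠ 0 := by decide
  tauto

lemma det_eq (a b c d : GaussianInt) : Complex.normSq (Matrix.det
        (((Real.sqrt 5 : ℂ))⁻¹ •
          !![alC * (toComplex a + toComplex b * thC),
             alC * (toComplex c + toComplex d * thC);
             Complex.I * (salC * (toComplex c + toComplex d * thbC)),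
             salC * (toComplex a + toComplex b * thbC)])) =
    1 / 5 * ((gz a b c d).norm : ℝ) := by
  have hs : (Real.sqrt 5 : ℂ) ^ 2 = 5 := by
    rw [← Complex.ofReal_pow, Real.sq_sqrt (by norm_num)]; norm_num
  have hI : toComplex gI = Complex.I := by simp [gI, toComplex_def]
  have hsum : thC + thbC = 1 := by unfold thC thbC; ring
  have hprod : thC * thbC = -1 := by unfold thC thbC; linear_combination - hs / 4
  have hal : alC * salC = 2 + Complex.I := by
    unfold alC salC
    linear_combination Complex.I * hsum + Complex.I ^ 2 * hprod - Complex.I_sq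
  have hdet : (Matrix.det
        (((Real.sqrt 5 : ℂ))⁻¹ •
          !![alC * (toComplex a + toComplex b * thC),
             alC * (toComplex c + toComplex d * thC);
             Complex.I * (salC * (toComplex c + toComplex d * thbC)),
             salC * (toComplex a + toComplex b * thbC)])) =
      (1 / 5 : ℝ) * (2 + Complex.I) * toComplex (gz a b c d) := by
    have h0 : toComplex (gz a b c d) =
        (toComplex a + toComplex b * thC) * (toComplex a + toComplex b * thbC) - Complex.I *
        ((toComplex c + toComplex d * thC) * (toComplex c + toComplex d * thbC)) := by
      unfold gz
      simp only [map_sub, map_add, map_mul, map_pow, hI]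
      linear_combination -(toComplex a * toComplex b - Complex.I * (toComplex c * toComplex d)) * hsum
        - (toComplex b ^ 2 - Complex.I * toComplex d ^ 2) * hprod
    rw [Matrix.det_smul, Matrix.det_fin_two_of, h0, ← hal, Fintype.card_fin, inv_pow, hs]
    push_cast
    ring
  rw [hdet, Complex.normSq_mul, Complex.normSq_mul, Complex.normSq_ofReal, ← intCast_real_norm]
  have : Complex.normSq (2 + Complex.I) = 5 := by simp [Complex.normSq_apply]; norm_num
  rw [this]
  ring

/-- The minimum, over all `(x₀, x₁) ∈ (ℤ[i][θ])² \ {(0,0)}` (with `x₀ = a + bθ`,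
`x₁ = c + dθ`, `a, b, c, d` Gaussian integers), of the squared modulus of the
determinant of the Golden-code codeword
`(1/√5)·[[α x₀, α x₁], [i·σ(α x₁), σ(α x₀)]]` equals `1/5`:
the minimum determinant of the Golden code is `δ(C) = 1/5`. -/
theorem stmt5 :
    IsLeast { r : ℝ | ∃ a b c d : GaussianInt, ¬(a = 0 ∧ b = 0 ∧ c = 0 ∧ d = 0) ∧
      r = Complex.normSq (Matrix.det
        (((Real.sqrt 5 : ℂ))⁻¹ •
          !![alC * (toComplex a + toComplex b * thC),
             alC * (toComplex c + toComplex d * thC);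
             Complex.I * (salC * (toComplex c + toComplex d * thbC)),
             salC * (toComplex a + toComplex b * thbC)])) }
      (1 / 5 : ℝ) := by
  constructor
  · refine ⟨1, 0, 0, 0, by simp, ?_⟩
    rw [det_eq]
    have : (gz 1 0 0 0).norm = 1 := by decide
    rw [this]; norm_num
  · rintro r ⟨a, b, c, d, hne, rfl⟩
    rw [det_eq]
    have h1 : 0 < (gz a b c d).norm := norm_pos.2 fun h => hne (gz_ne a b c d h)
    have h2 : (1 : ℝ) ≤ ((gz a b c d).norm : ℝ) := by exact_mod_cast h1
    linarith
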